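/- arXiv:1811.03962 — 2 statements merged into one kernel-verified Lean document; each statement's English description precedes it below -/
import Mathlib

section
/- (Pointwise linearization of ReLU differences.) Given vectors a, b ∈ ℝ^m and the diagonal matrix D ∈ ℝ^{m×m} with D_{kk} = 1 if a_k ≥ 0 and D_{kk} = 0 otherwise, there exists a diagonal matrix D'' ∈ ℝ^{m×m} such that: (i) |D_{kk} + D''_{kk}| ≤ 1 and |D''_{kk}| ≤ 1 for every k ∈ [m]; (ii) D''_{kk} ≠ 0 only for those k for which the indicators 1[a_k ≥ 0] and 1[b_k ≥ 0] differ; and (iii) φ(a) − φ(b) = (D + D'')(a − b), where φ is the coordinatewise ReLU φ(z)_k = max(z_k, 0). -/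
/-!
The claim decouples over coordinates, so it reduces to a fact about two reals `x`, `y`
(`relu_sub_linearization`). If `x` and `y` have the same sign indicator, ReLU is linear on the
segment between them and no correction is needed. Otherwise `x ≠ y`, and the slope of the secant
of ReLU through `x` and `y` lies in `[0, 1]`; the correction is this slope minus the indicator
`1[x ≥ 0]`.
-/

open MeasureTheory ProbabilityTheory

noncomputable section

namespace DNNPaper

/-! ### Elementary linear algebra on plain function matrices -/

def mulVec {p q : ℕ} (M : Fin p → Fin q → ℝ) (v : Fin q → ℝ) : Fin p → ℝ :=
  fun i => ∑ j, M i j * v j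

def mmul {p q r : ℕ} (M : Fin p → Fin q → ℝ) (N : Fin q → Fin r → ℝ) :
    Fin p → Fin r → ℝ :=
  fun i k => ∑ j, M i j * N j k

def transpose {p q : ℕ} (M : Fin p → Fin q → ℝ) : Fin q → Fin p → ℝ :=
  fun j i => M i j

def dot {p : ℕ} (u v : Fin p → ℝ) : ℝ := ∑ i, u i * v i

def outer {p q : ℕ} (u : Fin p → ℝ) (v : Fin q → ℝ) : Fin p → Fin q → ℝ :=
  fun i j => u i * v j

def idMat (p : ℕ) : Fin p → Fin p → ℝ := fun i j => if i = j then 1 else 0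

def diagMat {p : ℕ} (dg : Fin p → ℝ) : Fin p → Fin p → ℝ :=
  fun i j => if i = j then dg i else 0

def relu {p : ℕ} (v : Fin p → ℝ) : Fin p → ℝ := fun k => max (v k) 0

/-- diagonal entries of the ReLU sign matrix of a pre-activation vector -/
def signOf {p : ℕ} (g : Fin p → ℝ) : Fin p → ℝ := fun k => if 0 ≤ g k then 1 else 0

/-- Euclidean norm -/
def l2 {p : ℕ} (v : Fin p → ℝ) : ℝ := Real.sqrt (∑ k, v k ^ 2)

/-- max-norm -/
def linf {p : ℕ} (v : Fin p → ℝ) : ℝ := ⨆ k, |v k|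

/-- number of nonzero entries -/
def l0 {p : ℕ} (v : Fin p → ℝ) : ℕ := (Finset.univ.filter fun k => v k ≠ 0).card

/-- Frobenius norm -/
def frob {p q : ℕ} (M : Fin p → Fin q → ℝ) : ℝ := Real.sqrt (∑ i, ∑ j, M i j ^ 2)

/-- spectral norm (ℓ₂ operator norm) -/
def spec {p q : ℕ} (M : Fin p → Fin q → ℝ) : ℝ :=
  sSup {r | ∃ v : Fin q → ℝ, l2 v ≤ 1 ∧ r = l2 (mulVec M v)}

/-- trace (Frobenius) inner product -/
def innerF {p q : ℕ} (M N : Fin p → Fin q → ℝ) : ℝ := ∑ i, ∑ j, M i j * N i j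

/-- `‖W‖₂ = max_ℓ ‖W_ℓ‖₂` for a tuple of matrices -/
def tupleSpec {m L : ℕ} (W : Fin L → Fin m → Fin m → ℝ) : ℝ := ⨆ ℓ, spec (W ℓ)

/-! ### The network -/

variable {𝔡 m d L : ℕ}

/-- `Wat W ℓ` is the weight matrix of layer `ℓ ∈ {1,…,L}` (identity outside this range). -/
def Wat (W : Fin L → Fin m → Fin m → ℝ) (ℓ : ℕ) : Fin m → Fin m → ℝ :=
  if h : 1 ≤ ℓ ∧ ℓ ≤ L then W ⟨ℓ - 1, by omega⟩ else idMat m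

/-- the forward (post-activation) vectors `h_ℓ`, `ℓ = 0,1,…,L` -/
def hseq (A : Fin m → Fin 𝔡 → ℝ) (W : Fin L → Fin m → Fin m → ℝ) (x : Fin 𝔡 → ℝ) :
    ℕ → Fin m → ℝ
  | 0 => relu (mulVec A x)
  | ℓ + 1 =>
      if ℓ + 1 ≤ L then relu (mulVec (Wat W (ℓ + 1)) (hseq A W x ℓ)) else hseq A W x ℓ

/-- the pre-activation vectors `g_ℓ`, `ℓ = 0,1,…,L` -/
def gseq (A : Fin m → Fin 𝔡 → ℝ) (W : Fin L → Fin m → Fin m → ℝ) (x : Fin 𝔡 → ℝ) :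
    ℕ → Fin m → ℝ
  | 0 => mulVec A x
  | ℓ + 1 => mulVec (Wat W (ℓ + 1)) (hseq A W x ℓ)

/-- `chainProd W Dfun a b = (D_b W_b) (D_{b-1} W_{b-1}) ⋯ (D_a W_a)` where `D_ℓ` is the
diagonal matrix with entries `Dfun ℓ`; it is the identity when `b < a`, and factors with
index outside `{1,…,L}` are skipped. -/
def chainProd (W : Fin L → Fin m → Fin m → ℝ) (Dfun : ℕ → Fin m → ℝ) (a : ℕ) :
    ℕ → Fin m → Fin m → ℝ
  | 0 => idMat m
  | b + 1 =>
      if a ≤ b + 1 ∧ b + 1 ≤ L then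
        mmul (mmul (diagMat (Dfun (b + 1))) (Wat W (b + 1))) (chainProd W Dfun a b)
      else chainProd W Dfun a b

/-- `prodDW A W x a b = D_b W_b D_{b-1} W_{b-1} ⋯ D_a W_a` with the sign matrices of input `x` -/
def prodDW (A : Fin m → Fin 𝔡 → ℝ) (W : Fin L → Fin m → Fin m → ℝ) (x : Fin 𝔡 → ℝ)
    (a b : ℕ) : Fin m → Fin m → ℝ :=
  chainProd W (fun ℓ => signOf (gseq A W x ℓ)) a b

/-- `Back_ℓ = B D_L W_L ⋯ D_ℓ W_ℓ` (equal to `B` for `ℓ = L+1`) -/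
def backMat (B : Fin d → Fin m → ℝ) (A : Fin m → Fin 𝔡 → ℝ)
    (W : Fin L → Fin m → Fin m → ℝ) (x : Fin 𝔡 → ℝ) (ℓ : ℕ) : Fin d → Fin m → ℝ :=
  mmul B (prodDW A W x ℓ L)

/-- formula gradient w.r.t. `W_ℓ` with an arbitrary (fake) loss vector `v`:
`D_ℓ (Back_{ℓ+1}ᵀ v) h_{ℓ-1}ᵀ` -/
def gradW (B : Fin d → Fin m → ℝ) (A : Fin m → Fin 𝔡 → ℝ)
    (W : Fin L → Fin m → Fin m → ℝ) (x : Fin 𝔡 → ℝ) (v : Fin d → ℝ) (ℓ : ℕ) :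
    Fin m → Fin m → ℝ :=
  outer (mulVec (diagMat (signOf (gseq A W x ℓ)))
      (mulVec (transpose (backMat B A W x (ℓ + 1))) v))
    (hseq A W x (ℓ - 1))

/-- loss vector `B h_L − y` -/
def lossVec (B : Fin d → Fin m → ℝ) (A : Fin m → Fin 𝔡 → ℝ)
    (W : Fin L → Fin m → Fin m → ℝ) (x : Fin 𝔡 → ℝ) (y : Fin d → ℝ) : Fin d → ℝ :=
  fun j => mulVec B (hseq A W x L) j - y j

/-- per-sample ℓ₂ regression loss `F_i` -/
def objFi (B : Fin d → Fin m → ℝ) (A : Fin m → Fin 𝔡 → ℝ)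
    (W : Fin L → Fin m → Fin m → ℝ) (x : Fin 𝔡 → ℝ) (y : Fin d → ℝ) : ℝ :=
  (1 / 2) * l2 (lossVec B A W x y) ^ 2

/-- total objective `F` -/
def objF {n : ℕ} (B : Fin d → Fin m → ℝ) (A : Fin m → Fin 𝔡 → ℝ)
    (W : Fin L → Fin m → Fin m → ℝ) (x : Fin n → Fin 𝔡 → ℝ)
    (y : Fin n → Fin d → ℝ) : ℝ :=
  ∑ i, objFi B A W (x i) (y i)

/-- formula gradient of the total objective w.r.t. `W_ℓ` -/
def gradF {n : ℕ} (B : Fin d → Fin m → ℝ) (A : Fin m → Fin 𝔡 → ℝ)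
    (W : Fin L → Fin m → Fin m → ℝ) (x : Fin n → Fin 𝔡 → ℝ)
    (y : Fin n → Fin d → ℝ) (ℓ : ℕ) : Fin m → Fin m → ℝ :=
  ∑ i, gradW B A W (x i) (lossVec B A W (x i) (y i)) ℓ

/-! ### Random initialization -/

/-- a `p × q` random matrix with i.i.d. `N(0, v)` entries -/
def gaussMat (p q : ℕ) (v : NNReal) : Measure (Fin p → Fin q → ℝ) :=
  Measure.pi fun _ => Measure.pi fun _ => gaussianReal 0 v

/-- joint law of `(A, W)` at random initialization -/
def initAW (𝔡 m L : ℕ) :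
    Measure ((Fin m → Fin 𝔡 → ℝ) × (Fin L → Fin m → Fin m → ℝ)) :=
  (gaussMat m 𝔡 (2 / m)).prod (Measure.pi fun _ : Fin L => gaussMat m m (2 / m))

/-- joint law of `(A, W, B)` at random initialization -/
def initMeasure (𝔡 m d L : ℕ) :
    Measure ((Fin m → Fin 𝔡 → ℝ) ×
      (Fin L → Fin m → Fin m → ℝ) × (Fin d → Fin m → ℝ)) :=
  (gaussMat m 𝔡 (2 / m)).prod
    ((Measure.pi fun _ : Fin L => gaussMat m m (2 / m)).prod (gaussMat d m (1 / d)))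


/-- The one-coordinate case: the secant slope of ReLU between `x` and `y` is `1[x ≥ 0] + c`,
where the correction `c` vanishes unless the sign indicators of `x` and `y` differ. -/
theorem relu_sub_linearization (x y : ℝ) :
    ∃ c : ℝ,
      (|(if 0 ≤ x then (1 : ℝ) else 0) + c| ≤ 1 ∧ |c| ≤ 1) ∧
      (c ≠ 0 → ¬((0 ≤ x) ↔ (0 ≤ y))) ∧
      max x 0 - max y 0 = ((if 0 ≤ x then (1 : ℝ) else 0) + c) * (x - y) := by
  by_cases hx : 0 ≤ x <;> by_cases hy : 0 ≤ y
  · exact ⟨0, by simp [hx], by simp, by simp [hx, hy]⟩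
  · -- The secant slope is `x / (x - y)`, which is `1 + y / (x - y)`.
    have hy' : y < 0 := not_le.mp hy
    have hd : 0 < x - y := by linarith
    have hslope : 1 + y / (x - y) = x / (x - y) := by field_simp; ring
    refine ⟨y / (x - y), ⟨?_, ?_⟩, fun _ h => hy (h.mp hx), ?_⟩
    · rw [if_pos hx, hslope, abs_of_nonneg (div_nonneg hx hd.le), div_le_one hd]
      linarith
    · rw [abs_div, abs_of_neg hy', abs_of_pos hd, div_le_one hd]
      linarith
    · rw [if_pos hx, hslope, max_eq_left hx, max_eq_right hy'.le, div_mul_cancel₀ _ hd.ne',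
        sub_zero]
  · -- The indicator of `x` is `0`, so the correction is the whole secant slope `y / (y - x)`.
    have hx' : x < 0 := not_le.mp hx
    have hd : 0 < y - x := by linarith
    have habs : |y / (y - x)| ≤ 1 := by
      rw [abs_of_nonneg (div_nonneg hy hd.le), div_le_one hd]
      linarith
    refine ⟨y / (y - x), ⟨?_, habs⟩, fun _ h => hx (h.mpr hy), ?_⟩
    · rwa [if_neg hx, zero_add]
    · rw [if_neg hx, max_eq_right hx'.le, max_eq_left hy, zero_add, ← neg_sub y x, mul_neg,
        div_mul_cancel₀ _ hd.ne', zero_sub]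
  · exact ⟨0, by simp [hx], by simp, by
      simp [hx, max_eq_right (not_le.mp hx).le, max_eq_right (not_le.mp hy).le]⟩

/-- Proposition 11.3, pointwise linearization of ReLU differences. -/
theorem statement18 (m : ℕ) (a b : Fin m → ℝ) :
    ∃ D'' : Fin m → ℝ,
      (∀ k, |(if 0 ≤ a k then (1 : ℝ) else 0) + D'' k| ≤ 1 ∧ |D'' k| ≤ 1) ∧
      (∀ k, D'' k ≠ 0 → ¬((0 ≤ a k) ↔ (0 ≤ b k))) ∧
      (∀ k, max (a k) 0 - max (b k) 0 =
        ((if 0 ≤ a k then (1 : ℝ) else 0) + D'' k) * (a k - b k)) := by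
  choose c hbound hsupp heq using fun k => relu_sub_linearization (a k) (b k)
  exact ⟨c, hbound, hsupp, heq⟩

end DNNPaper
end
end

section
/- (A Gaussian ReLU second-moment lower bound.) Let g₁ and g₂ be independent real random variables, each distributed as N(0, 2) (Gaussian with mean 0 and variance 2). Then for every α ∈ ℝ and every δ ∈ [0, 1/6], E[(φ(g₁) − φ(α·g₁ + δ·g₂))²] ≥ δ²·(1 − δ), where φ(t) = max(t, 0). -/
/-!
Write `φ` for the ReLU, `x = g₁`, `u = α g₁ + δ g₂`. The pointwise identity
`(φ(x) - φ(u))² + (φ(-x) - φ(-u))² = (x - u)² - 2 (φ(x) φ(-u) + φ(-x) φ(u))`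
and the invariance of the law under `(g₁, g₂) ↦ (-g₁, -g₂)` give
`E (φ(x) - φ(u))² = (1 - α)² + δ² - 2 R` with `R = E[φ(x) φ(-u)]` (`integral_eq_sub_cross`),
so the claim is `2 R ≤ (1 - α)² + δ³`.

* For `α ≤ 1/2`, the inequality `φ(-u) ≤ max(-α, 0) φ(g₁) + δ φ(-g₂)` on `g₁ ≥ 0` yields
  `R ≤ max(-α, 0) + δ / 3` (`cross_le_linear`), which `(1 - α)²` absorbs since `δ ≤ 1/6`.
* For `α ≥ 1/2`, signs disagree only for `0 < g₁ < -δ g₂ / α`. Bounding the density of `g₁` by its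
  maximum and integrating over this interval yields `R ≤ δ³ / (9 α²)` (`cross_le_cubic`), which is
  below `δ³ / 2`.
-/

open MeasureTheory ProbabilityTheory

noncomputable section

namespace DNNPaper

/-! ### The network -/

variable {𝔡 m d L : ℕ}

/-! ### Moments of `N(0, 2)` -/

/-- The centred Gaussian law of variance `2`. -/
local notation "γ" => gaussianReal 0 2

lemma measurePreserving_neg_gauss : MeasurePreserving (fun x : ℝ => -x) γ γ := by
  refine ⟨measurable_neg, ?_⟩
  have := gaussianReal_map_neg (μ := 0) (v := 2)
  rwa [neg_zero] at this

lemma measurePreserving_neg_prod :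
    MeasurePreserving (fun p : ℝ × ℝ => -p) ((γ).prod γ) ((γ).prod γ) :=
  measurePreserving_neg_gauss.prod measurePreserving_neg_gauss

lemma integral_gauss_neg (f : ℝ → ℝ) : ∫ y, f (-y) ∂γ = ∫ y, f y ∂γ :=
  measurePreserving_neg_gauss.integral_comp (MeasurableEquiv.neg ℝ).measurableEmbedding f

lemma integral_gauss_prod_neg (f : ℝ × ℝ → ℝ) :
    ∫ p, f (-p) ∂((γ).prod γ) = ∫ p, f p ∂((γ).prod γ) :=
  measurePreserving_neg_prod.integral_comp (MeasurableEquiv.neg (ℝ × ℝ)).measurableEmbedding f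

lemma integrable_gauss_pow (n : ℕ) : Integrable (fun y : ℝ => y ^ n) γ := by
  have h := (memLp_id_gaussianReal (μ := 0) (v := 2) (n : NNReal))
  rcases Nat.eq_zero_or_pos n with rfl | hn
  · simp
  · have := h.integrable_norm_pow (by omega)
    refine this.mono' (by fun_prop) (ae_of_all _ fun x => ?_)
    simp

lemma integral_gauss_sq : ∫ y, y ^ 2 ∂γ = 2 := by
  have h := variance_fun_id_gaussianReal (μ := 0) (v := 2)
  rw [variance_eq_integral (by fun_prop)] at h
  simpa using h

lemma integrable_gauss_relu_pow (n : ℕ) : Integrable (fun y : ℝ => (max y 0) ^ n) γ := by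
  refine (integrable_gauss_pow n).norm.mono' (by fun_prop) (ae_of_all _ fun x => ?_)
  rw [norm_pow, norm_pow]
  gcongr
  rcases le_total x 0 with h | h <;> simp [h]

lemma integral_gauss_relu_sq : ∫ y, (max y 0) ^ 2 ∂γ = 1 := by
  have h := integral_gauss_neg (fun y => (max y 0) ^ 2)
  have hi : Integrable (fun y : ℝ => (max (-y) 0) ^ 2) γ := by
    refine (integrable_gauss_pow 2).mono' (by fun_prop) (ae_of_all _ fun x => ?_)
    rw [Real.norm_eq_abs, abs_of_nonneg (by positivity)]
    rcases le_total x 0 with h | h <;> simp [h]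
  have h2 : ∫ y, (max y 0) ^ 2 + (max (-y) 0) ^ 2 ∂γ = 2 := by
    rw [← integral_gauss_sq]
    congr 1
    ext y
    rcases le_total y 0 with h | h <;> simp [h]
  rw [integral_add (integrable_gauss_relu_pow 2) hi, h] at h2
  linarith

/-- The maximum `1 / √(4π)` of the density of `N(0, 2)`. -/
def peak : ℝ := (√(2 * Real.pi * 2))⁻¹

lemma peak_nonneg : 0 ≤ peak := by unfold peak; positivity

lemma peak_sq_le : peak ^ 2 ≤ 1 / 12 := by
  have := Real.pi_gt_three
  rw [peak, inv_pow, Real.sq_sqrt (by positivity), one_div]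
  exact inv_anti₀ (by norm_num) (by linarith)

lemma gauss_pdf (x : ℝ) : gaussianPDFReal 0 2 x = peak * Real.exp (-(1 / 4) * x ^ 2) := by
  simp only [gaussianPDFReal, peak]
  congr 2
  push_cast
  ring

lemma gauss_pdf_le (x : ℝ) : gaussianPDFReal 0 2 x ≤ peak := by
  rw [gauss_pdf]
  refine mul_le_of_le_one_right peak_nonneg (Real.exp_le_one_iff.2 ?_)
  nlinarith [sq_nonneg x]

/-- Half-line moments reduce to values of the Gamma function. -/
lemma integral_gauss_relu_pow (n : ℕ) (hn : n ≠ 0) :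
    ∫ y, (max y 0) ^ n ∂γ =
      peak * ((1 / 4 : ℝ) ^ (-((n : ℝ) + 1) / 2) * (1 / 2) * Real.Gamma (((n : ℝ) + 1) / 2)) := by
  rw [integral_gaussianReal_eq_integral_smul (by norm_num),
    ← integral_rpow_mul_exp_neg_mul_rpow (p := 2) (q := n) (b := 1 / 4) (by norm_num)
      (by have : (0 : ℝ) ≤ n := by positivity
          linarith) (by norm_num),
    ← integral_const_mul, ← integral_indicator measurableSet_Ioi]
  congr 1
  ext y
  by_cases hy : 0 < y
  · rw [Set.indicator_of_mem (Set.mem_Ioi.2 hy), gauss_pdf, max_eq_left hy.le, smul_eq_mul,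
      Real.rpow_natCast, Real.rpow_two]
    ring
  · rw [Set.indicator_of_notMem (by simpa using hy), max_eq_right (not_lt.1 hy)]
    simp [hn]

lemma integral_gauss_relu : ∫ y, max y 0 ∂γ = 2 * peak := by
  have h := integral_gauss_relu_pow 1 (by norm_num)
  norm_num [Real.rpow_neg_one] at h
  rw [h]; ring

lemma integral_gauss_relu_cube : ∫ y, (max y 0) ^ 3 ∂γ = 8 * peak := by
  have h := integral_gauss_relu_pow 3 (by norm_num)
  rw [h]
  have e1 : (-((3 : ℕ) + 1 : ℝ) / 2) = -((2 : ℕ) : ℝ) := by norm_num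
  have e2 : (((3 : ℕ) + 1 : ℝ) / 2) = 2 := by norm_num
  rw [e1, e2, Real.rpow_neg (by norm_num), Real.rpow_natCast, Real.Gamma_two]
  norm_num
  ring

/-! ### Reduction to the sign-disagreement term -/

/-- Functions of at most quadratic growth are integrable on the plane. -/
lemma integrable_of_quadratic {f : ℝ × ℝ → ℝ} (hf : Continuous f) (C : ℝ)
    (h : ∀ p, |f p| ≤ C * (p.1 ^ 2 + p.2 ^ 2)) : Integrable f ((γ).prod γ) := by
  have h1 : Integrable (fun p : ℝ × ℝ => p.1 ^ 2) ((γ).prod γ) := (integrable_gauss_pow 2).comp_fst _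
  have h2 : Integrable (fun p : ℝ × ℝ => p.2 ^ 2) ((γ).prod γ) := (integrable_gauss_pow 2).comp_snd _
  exact ((h1.add h2).const_mul C).mono' hf.aestronglyMeasurable (ae_of_all _ h)

lemma abs_max_mul_max_le (a b : ℝ) : |max a 0 * max b 0| ≤ (a ^ 2 + b ^ 2) / 2 := by
  rw [abs_of_nonneg (by positivity)]
  rcases le_total a 0 with ha | ha <;> rcases le_total b 0 with hb | hb <;>
    simp only [max_eq_left, max_eq_right, ha, hb] <;> nlinarith [sq_nonneg (a - b)]

/-- The cross term `E[φ(g₁) φ(-(α g₁ + δ g₂))]`, which measures sign disagreement. -/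
def cross (α δ : ℝ) : ℝ :=
  ∫ p : ℝ × ℝ, max p.1 0 * max (-(α * p.1 + δ * p.2)) 0 ∂((γ).prod γ)

lemma integrable_cross (α δ : ℝ) :
    Integrable (fun p : ℝ × ℝ => max p.1 0 * max (-(α * p.1 + δ * p.2)) 0) ((γ).prod γ) := by
  refine integrable_of_quadratic (by fun_prop) (1 + α ^ 2 + δ ^ 2) fun p => ?_
  refine (abs_max_mul_max_le _ _).trans ?_
  nlinarith [sq_nonneg (α * p.2 - δ * p.1), sq_nonneg (α * p.1), sq_nonneg (δ * p.2),
    sq_nonneg (α * p.2), sq_nonneg (δ * p.1), sq_nonneg p.1, sq_nonneg p.2,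
    sq_nonneg (α * p.1 - δ * p.2)]

/-- Averaging the integrand over `p ↦ -p` turns it into `(g₁ - u)² / 2`, with
`u = α g₁ + δ g₂`, minus the two sign-disagreement terms. -/
lemma integral_eq_sub_cross (α δ : ℝ) :
    ∫ p : ℝ × ℝ, (max p.1 0 - max (α * p.1 + δ * p.2) 0) ^ 2 ∂((γ).prod γ) =
      (1 - α) ^ 2 + δ ^ 2 - 2 * cross α δ := by
  set F : ℝ × ℝ → ℝ := fun p => (max p.1 0 - max (α * p.1 + δ * p.2) 0) ^ 2 with hF
  set G : ℝ × ℝ → ℝ := fun p => max p.1 0 * max (-(α * p.1 + δ * p.2)) 0 with hG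
  have hGi : Integrable G ((γ).prod γ) := integrable_cross α δ
  have hFi : Integrable F ((γ).prod γ) := by
    refine integrable_of_quadratic (by fun_prop) (2 * (1 + α ^ 2 + δ ^ 2)) fun p => ?_
    have h1 : (max p.1 0 - max (α * p.1 + δ * p.2) 0) ^ 2 ≤ p.1 ^ 2 + (α * p.1 + δ * p.2) ^ 2 := by
      rcases le_total p.1 0 with ha | ha <;> rcases le_total (α * p.1 + δ * p.2) 0 with hb | hb <;>
        simp only [max_eq_left, max_eq_right, ha, hb] <;>
        nlinarith [sq_nonneg p.1, sq_nonneg (α * p.1 + δ * p.2)]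
    simp only [hF]
    rw [abs_of_nonneg (sq_nonneg _)]
    refine h1.trans ?_
    nlinarith [sq_nonneg (α * p.2 - δ * p.1), sq_nonneg (α * p.1), sq_nonneg (δ * p.2),
      sq_nonneg (α * p.2), sq_nonneg (δ * p.1), sq_nonneg p.1, sq_nonneg p.2,
      sq_nonneg (α * p.1 - δ * p.2)]
  have hGi' : Integrable (fun p => G (-p)) ((γ).prod γ) := measurePreserving_neg_prod.integrable_comp_of_integrable hGi
  have hFi' : Integrable (fun p => F (-p)) ((γ).prod γ) := measurePreserving_neg_prod.integrable_comp_of_integrable hFi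
  have hpt : ∀ p : ℝ × ℝ, F p + F (-p) =
      ((1 - α) ^ 2 * p.1 ^ 2 + δ ^ 2 * p.2 ^ 2 + (-2 * (1 - α) * δ) * (p.1 * p.2))
        - 2 * (G p + G (-p)) := by
    intro p
    simp only [hF, hG, Prod.fst_neg, Prod.snd_neg]
    have e : α * -p.1 + δ * -p.2 = -(α * p.1 + δ * p.2) := by ring
    rw [e, neg_neg]
    have key : ∀ x u : ℝ, (max x 0 - max u 0) ^ 2 + (max (-x) 0 - max (-u) 0) ^ 2 =
        (x - u) ^ 2 - 2 * (max x 0 * max (-u) 0 + max (-x) 0 * max u 0) := by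
      intro x u
      rcases le_total x 0 with ha | ha <;> rcases le_total u 0 with hb | hb <;>
        simp [ha, hb] <;> ring
    rw [key]; ring
  have i1 : Integrable (fun p : ℝ × ℝ => p.1 ^ 2) ((γ).prod γ) := (integrable_gauss_pow 2).comp_fst _
  have i2 : Integrable (fun p : ℝ × ℝ => p.2 ^ 2) ((γ).prod γ) := (integrable_gauss_pow 2).comp_snd _
  have i3 : Integrable (fun p : ℝ × ℝ => p.1 * p.2) ((γ).prod γ) := by
    refine integrable_of_quadratic (by fun_prop) 1 fun p => ?_
    rw [abs_le]
    constructor <;> nlinarith [sq_nonneg (p.1 - p.2), sq_nonneg (p.1 + p.2)]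
  have v1 : ∫ p : ℝ × ℝ, p.1 ^ 2 ∂((γ).prod γ) = 2 := by
    rw [integral_fun_fst (fun x : ℝ => x ^ 2), integral_gauss_sq]; simp
  have v2 : ∫ p : ℝ × ℝ, p.2 ^ 2 ∂((γ).prod γ) = 2 := by
    rw [integral_fun_snd (fun x : ℝ => x ^ 2), integral_gauss_sq]; simp
  have v3 : ∫ p : ℝ × ℝ, p.1 * p.2 ∂((γ).prod γ) = 0 := by
    rw [integral_prod_mul (fun x : ℝ => x) (fun x : ℝ => x), integral_id_gaussianReal]; simp
  have hsum : ∫ p, (F p + F (-p)) ∂((γ).prod γ) =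
      2 * ((1 - α) ^ 2 + δ ^ 2) - 4 * cross α δ := by
    simp_rw [hpt]
    rw [integral_sub (by fun_prop) (by exact (hGi.add hGi').const_mul 2),
      integral_add (by fun_prop) (by fun_prop),
      integral_add (i1.const_mul _) (i2.const_mul _), integral_const_mul, integral_const_mul,
      integral_const_mul, integral_const_mul, integral_add hGi hGi', integral_gauss_prod_neg,
      v1, v2, v3]
    change _ - 2 * (cross α δ + cross α δ) = _
    ring
  rw [integral_add hFi hFi', integral_gauss_prod_neg] at hsum
  linarith

/-! ### Bounds on the sign-disagreement term -/

/-- A bound linear in `δ`, used when `α` stays away from `1`. -/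
lemma cross_le_linear (α δ a : ℝ) (hδ : 0 ≤ δ) (ha : 0 ≤ a) (haα : -α ≤ a) :
    cross α δ ≤ a + δ / 3 := by
  have i1 : Integrable (fun p : ℝ × ℝ => (max p.1 0) ^ 2) ((γ).prod γ) :=
    (integrable_gauss_relu_pow 2).comp_fst _
  have i2 : Integrable (fun p : ℝ × ℝ => max p.1 0 * max (-p.2) 0) ((γ).prod γ) := by
    simpa using integrable_cross 0 1
  have h : cross α δ ≤
      ∫ p : ℝ × ℝ, a * (max p.1 0) ^ 2 + δ * (max p.1 0 * max (-p.2) 0) ∂((γ).prod γ) := by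
    refine integral_mono (integrable_cross α δ) ((i1.const_mul _).add (i2.const_mul _)) fun p => ?_
    have hm : max (-(α * p.1 + δ * p.2)) 0 * max p.1 0 ≤
        (a * max p.1 0 + δ * max (-p.2) 0) * max p.1 0 := by
      rcases le_total p.1 0 with hx | hx
      · simp [hx]
      · gcongr
        refine max_le ?_ (by positivity)
        rw [max_eq_left hx]
        nlinarith [mul_le_mul_of_nonneg_right haα hx,
          mul_le_mul_of_nonneg_left (le_max_left (-p.2) 0) hδ]
    dsimp only
    linarith
  rw [integral_add (i1.const_mul _) (i2.const_mul _), integral_const_mul, integral_const_mul,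
    integral_fun_fst (fun x : ℝ => (max x 0) ^ 2), integral_gauss_relu_sq,
    integral_prod_mul (fun x : ℝ => max x 0) (fun y : ℝ => max (-y) 0),
    integral_gauss_neg (fun y => max y 0), integral_gauss_relu] at h
  simp only [probReal_univ, smul_eq_mul, mul_one] at h
  nlinarith [mul_le_mul_of_nonneg_left peak_sq_le hδ]

/-- Bounding the density by its maximum leaves the elementary integral
`∫₀^{c/α} x (c - α x) dx = c³ / (6 α²)`. -/
lemma integral_slice_le (α c : ℝ) (hα : 0 < α) :
    ∫ x, max x 0 * max (c - α * x) 0 ∂γ ≤ peak / (6 * α ^ 2) * (max c 0) ^ 3 := by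
  rcases le_total c 0 with hc | hc
  · have : ∀ x : ℝ, max x 0 * max (c - α * x) 0 = 0 := by
      intro x
      rcases le_total x 0 with hx | hx
      · simp [hx]
      · rw [max_eq_right (a := c - α * x) (by nlinarith), mul_zero]
    simp [this, hc]
  · have hca : 0 ≤ c / α := by positivity
    have hind : ∀ x : ℝ, max x 0 * max (c - α * x) 0 =
        (Set.Ioc 0 (c / α)).indicator (fun x => x * (c - α * x)) x := by
      intro x
      by_cases hx : x ∈ Set.Ioc 0 (c / α)
      · rw [Set.indicator_of_mem hx, max_eq_left hx.1.le, max_eq_left]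
        have := (le_div_iff₀ hα).1 hx.2
        linarith
      · rw [Set.indicator_of_notMem hx]
        rcases le_or_gt x 0 with h0 | h0
        · simp [h0]
        · have h1 : c / α < x := by
            by_contra hcon
            exact hx ⟨h0, not_lt.1 hcon⟩
          have := (div_lt_iff₀ hα).1 h1
          rw [max_eq_right (a := c - α * x) (by linarith), mul_zero]
    have hint : Integrable (fun x : ℝ => max x 0 * max (c - α * x) 0) := by
      simp_rw [hind]
      rw [integrable_indicator_iff measurableSet_Ioc]
      exact (Continuous.integrableOn_Icc (by fun_prop)).mono_set Set.Ioc_subset_Icc_self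
    have hval : ∫ x : ℝ, max x 0 * max (c - α * x) 0 = c ^ 3 / (6 * α ^ 2) := by
      simp_rw [hind]
      rw [integral_indicator measurableSet_Ioc, ← intervalIntegral.integral_of_le hca]
      have : ∀ x : ℝ, x * (c - α * x) = c * x - α * x ^ 2 := fun x => by ring
      simp_rw [this]
      rw [intervalIntegral.integral_sub (Continuous.intervalIntegrable (by fun_prop) _ _)
          (Continuous.intervalIntegrable (by fun_prop) _ _),
        intervalIntegral.integral_const_mul, intervalIntegral.integral_const_mul, integral_id,
        integral_pow]
      norm_num
      field_simp
      ring
    rw [integral_gaussianReal_eq_integral_smul (by norm_num), max_eq_left hc]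
    calc _ ≤ ∫ x : ℝ, peak * (max x 0 * max (c - α * x) 0) := by
            refine integral_mono_of_nonneg (ae_of_all _ fun x => ?_) (hint.const_mul _)
              (ae_of_all _ fun x => ?_)
            · exact mul_nonneg (gaussianPDFReal_nonneg _ _ _) (by positivity)
            · exact mul_le_mul_of_nonneg_right (gauss_pdf_le x) (by positivity)
      _ = _ := by
            rw [integral_const_mul, hval]
            ring

/-- A bound cubic in `δ`, used when `α` is bounded away from `0`. -/
lemma cross_le_cubic (α δ : ℝ) (hα : 0 < α) (hδ : 0 ≤ δ) :
    cross α δ ≤ δ ^ 3 / (9 * α ^ 2) := by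
  have hi := integrable_cross α δ
  have hmax : ∀ y : ℝ, (max (-(δ * y)) 0) ^ 3 = δ ^ 3 * (max (-y) 0) ^ 3 := by
    intro y
    rw [← mul_pow, mul_max_of_nonneg _ _ hδ, mul_zero, mul_neg]
  have i3 : Integrable (fun y : ℝ => (max (-y) 0) ^ 3) γ := by
    refine (integrable_gauss_pow 3).norm.mono' (by fun_prop) (ae_of_all _ fun x => ?_)
    rw [norm_pow, norm_pow]
    gcongr
    rcases le_total x 0 with h | h <;> simp [h]
  rw [cross, integral_prod_symm _ hi]
  calc _ ≤ ∫ y, peak / (6 * α ^ 2) * (δ ^ 3 * (max (-y) 0) ^ 3) ∂γ := by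
        refine integral_mono hi.integral_prod_right ((i3.const_mul _).const_mul _) fun y => ?_
        have h := integral_slice_le α (-(δ * y)) hα
        rw [hmax] at h
        refine le_trans (le_of_eq ?_) h
        congr 1
        ext x
        dsimp only
        congr 2
        ring
    _ = peak ^ 2 * (4 * δ ^ 3 / (3 * α ^ 2)) := by
        rw [integral_const_mul, integral_const_mul, integral_gauss_neg (fun y => (max y 0) ^ 3),
          integral_gauss_relu_cube]
        field_simp
        ring
    _ ≤ 1 / 12 * (4 * δ ^ 3 / (3 * α ^ 2)) :=
        mul_le_mul_of_nonneg_right peak_sq_le (by positivity)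
    _ = _ := by field_simp; ring

/-- Claim 7.5, a Gaussian ReLU second-moment lower bound. -/
theorem statement19 (α δ : ℝ) (hδ0 : 0 ≤ δ) (hδ : δ ≤ 1 / 6) :
    δ ^ 2 * (1 - δ) ≤
      ∫ p : ℝ × ℝ, (max p.1 0 - max (α * p.1 + δ * p.2) 0) ^ 2
        ∂((gaussianReal 0 2).prod (gaussianReal 0 2)) := by
  rw [integral_eq_sub_cross]
  have hδ3 : 0 ≤ δ ^ 3 := by positivity
  rcases le_total α (1 / 2) with hα | hα
  · rcases le_total α 0 with h0 | h0
    · have h := cross_le_linear α δ (-α) hδ0 (by linarith) le_rfl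
      nlinarith [sq_nonneg α]
    · have h := cross_le_linear α δ 0 hδ0 le_rfl (by linarith)
      nlinarith
  · have h := cross_le_cubic α δ (by linarith) hδ0
    have h2 : δ ^ 3 / (9 * α ^ 2) ≤ δ ^ 3 / 2 := by
      gcongr
      nlinarith
    nlinarith [sq_nonneg (1 - α)]

end DNNPaper
end
end
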